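/- Let Q be a left distributive quasigroup and P a subquasigroup of Q. Then P is normal in Q if and only if the following condition (C4) holds: whenever a, b, x, y, z ∈ Q satisfy (x·a)·(y·b) = z·(a·b) and at least two of the three elements x, y, z lie in P, then the remaining one also lies in P. -/

import Mathlib

/-- A (binary operation on a nonempty set is a) quasigroup: all left and right
translations are bijections. -/
def IsQuasigroup {Q : Type*} (mul : Q → Q → Q) : Prop :=
  Nonempty Q ∧ ∀ a : Q,
    Function.Bijective (fun x => mul a x) ∧ Function.Bijective (fun x => mul x a)

/-- A subquasigroup: a nonempty subset closed under multiplication and under both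
divisions (the unique solutions of `a·x = b` and `y·a = b` for `a, b ∈ P` lie in `P`). -/
def IsSubquasigroup {Q : Type*} (mul : Q → Q → Q) (P : Set Q) : Prop :=
  P.Nonempty ∧ ∀ a ∈ P, ∀ b ∈ P,
    mul a b ∈ P ∧ (∀ x, mul a x = b → x ∈ P) ∧ (∀ y, mul y a = b → y ∈ P)

/-- A normal congruence: an equivalence relation satisfying (C1), (C2), (C3). -/
def IsNormalCongruence {Q : Type*} (mul : Q → Q → Q) (r : Q → Q → Prop) : Prop :=
  Equivalence r ∧
  (∀ a b c d, r a b → r c d → r (mul a c) (mul b d)) ∧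
  (∀ a b c d, r a b → r (mul a c) (mul b d) → r c d) ∧
  (∀ a b c d, r c d → r (mul a c) (mul b d) → r a b)

/-- A subquasigroup is normal if it is an equivalence class of some normal congruence. -/
def IsNormalSubquasigroup {Q : Type*} (mul : Q → Q → Q) (P : Set Q) : Prop :=
  IsSubquasigroup mul P ∧
  ∃ r : Q → Q → Prop, IsNormalCongruence mul r ∧ ∃ a : Q, P = {x | r a x}

/-- A quasigroup is hamiltonian if every subquasigroup is normal. -/
def IsHamiltonian {Q : Type*} (mul : Q → Q → Q) : Prop :=
  ∀ P : Set Q, IsSubquasigroup mul P → IsNormalSubquasigroup mul P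

/-!
Write `P·a` for the set of all `p·a` with `p ∈ P`. When right translations are surjective, (C4) says
that if two of `u ∈ P·a`, `v ∈ P·b`, `u·v ∈ P·(a·b)` hold, then so does the third. Hence `P·a` and
`P·b` coincide as soon as they share an element `w`: for `u ∈ P·a`, solve `u·w = w·s` and get
`s ∈ P·b`, then `u·w ∈ P·(b·b)`, then `u ∈ P·b`. So equality of these sets is a normal congruence.
By left distributivity, (C4) with `x = a = b` or `y = a = b` makes a nonempty `P` a subquasigroup;
then `P·a = P` exactly when `a ∈ P`, so `P` is a class of this congruence.

Conversely, left distributivity turns `(x·a)·(y·b) = z·(a·b)` into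
`(x·a)·(y·b) = (z·a)·(z·b)`, where a normal congruence can be cancelled factor by factor.
-/

/-- Condition (C4): whenever `(x·a)·(y·b) = z·(a·b)` and two of `x, y, z` lie in `P`, then so does
the third. -/
def ConditionC4 {Q : Type*} (mul : Q → Q → Q) (P : Set Q) : Prop :=
  ∀ a b x y z : Q, mul (mul x a) (mul y b) = mul z (mul a b) →
    ((x ∈ P → y ∈ P → z ∈ P) ∧ (x ∈ P → z ∈ P → y ∈ P) ∧ (y ∈ P → z ∈ P → x ∈ P))

/-- The right translate `P·a`. Equality of translates is the congruence having `P` as a class; note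
that `a` need not belong to `P·a`. -/
def rightTranslate {Q : Type*} (mul : Q → Q → Q) (P : Set Q) (a : Q) : Set Q :=
  (fun p => mul p a) '' P

section

variable {Q : Type*} {mul : Q → Q → Q} {P : Set Q}

theorem mul_self_of_leftDistrib (hinj : ∀ a, Function.Injective fun x => mul x a)
    (hld : ∀ x a b, mul x (mul a b) = mul (mul x a) (mul x b)) (x : Q) : mul x x = x :=
  (hinj (mul x x) (hld x x x)).symm

theorem IsNormalCongruence.conditionC4_class {r : Q → Q → Prop} (hr : IsNormalCongruence mul r)
    (hld : ∀ x a b, mul x (mul a b) = mul (mul x a) (mul x b)) (e : Q) :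
    ConditionC4 mul {x | r e x} := by
  obtain ⟨heq, hmul, hleft, hright⟩ := hr
  have mul_right {u v : Q} (h : r u v) (c : Q) : r (mul u c) (mul v c) :=
    hmul _ _ _ _ h (heq.refl c)
  have cancel_right {u v c : Q} (h : r (mul u c) (mul v c)) : r u v :=
    hright _ _ _ _ (heq.refl c) h
  intro a b x y z h
  have h' : mul (mul x a) (mul y b) = mul (mul z a) (mul z b) := h.trans (hld z a b)
  refine ⟨fun hx hy => ?_, fun hx hz => ?_, fun hy hz => ?_⟩
  · have hyx : r y x := heq.trans (heq.symm hy) hx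
    have hzx : r (mul z (mul a b)) (mul x (mul a b)) := by
      rw [← h, hld x]
      exact hmul _ _ _ _ (heq.refl _) (mul_right hyx b)
    exact heq.trans hx (heq.symm (cancel_right hzx))
  · have hxz : r x z := heq.trans (heq.symm hx) hz
    have hyz : r (mul y b) (mul z b) :=
      hleft _ _ _ _ (mul_right hxz a) (h' ▸ heq.refl _)
    exact heq.trans hz (heq.symm (cancel_right hyz))
  · have hyz : r y z := heq.trans (heq.symm hy) hz
    have hxz : r (mul x a) (mul z a) :=
      hright _ _ _ _ (mul_right hyz b) (h' ▸ heq.refl _)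
    exact heq.trans hz (heq.symm (cancel_right hxz))

theorem IsSubquasigroup.rightTranslate_eq_self_iff (hP : IsSubquasigroup mul P)
    (hright : ∀ a, Function.Surjective fun x => mul x a) {a : Q} :
    rightTranslate mul P a = P ↔ a ∈ P := by
  constructor
  · intro h
    obtain ⟨p, hp⟩ := hP.1
    obtain ⟨q, hq, hqa⟩ : p ∈ rightTranslate mul P a := h.symm ▸ hp
    exact (hP.2 q hq p hp).2.1 a hqa
  · refine fun ha => Set.Subset.antisymm ?_ fun p hp => ?_
    · rintro _ ⟨p, hp, rfl⟩
      exact (hP.2 p hp a ha).1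
    · obtain ⟨q, hq⟩ := hright a p
      exact ⟨q, (hP.2 a ha p hp).2.2 q hq, hq⟩

namespace ConditionC4

theorem isSubquasigroup (hC4 : ConditionC4 mul P) (hidem : ∀ x, mul x x = x)
    (hld : ∀ x a b, mul x (mul a b) = mul (mul x a) (mul x b)) (hP : P.Nonempty) :
    IsSubquasigroup mul P := by
  have hC4_left (a y : Q) : a ∈ P → (y ∈ P ↔ mul a y ∈ P) := by
    have h : mul (mul a a) (mul y a) = mul (mul a y) (mul a a) := by rw [hidem, hld, hidem]
    exact fun ha => ⟨(hC4 a a a y (mul a y) h).1 ha, (hC4 a a a y (mul a y) h).2.1 ha⟩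
  have hC4_right (x a : Q) : a ∈ P → mul x a ∈ P → x ∈ P :=
    (hC4 a a x a (mul x a) rfl).2.2
  refine ⟨hP, fun a ha b hb => ⟨(hC4_left a b ha).1 hb, ?_, ?_⟩⟩
  · rintro x rfl
    exact (hC4_left a x ha).2 hb
  · rintro y rfl
    exact hC4_right y a ha hb

theorem mul_mem_rightTranslate (hC4 : ConditionC4 mul P)
    (hright : ∀ a, Function.Surjective fun x => mul x a) {a b u v : Q}
    (hu : u ∈ rightTranslate mul P a) (hv : v ∈ rightTranslate mul P b) :
    mul u v ∈ rightTranslate mul P (mul a b) := by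
  obtain ⟨x, hx, rfl⟩ := hu
  obtain ⟨y, hy, rfl⟩ := hv
  obtain ⟨z, hz⟩ := hright (mul a b) (mul (mul x a) (mul y b))
  exact ⟨z, (hC4 a b x y z hz.symm).1 hx hy, hz⟩

theorem right_mem_rightTranslate (hC4 : ConditionC4 mul P)
    (hright : ∀ a, Function.Surjective fun x => mul x a) {a b u v : Q}
    (hu : u ∈ rightTranslate mul P a) (huv : mul u v ∈ rightTranslate mul P (mul a b)) :
    v ∈ rightTranslate mul P b := by
  obtain ⟨x, hx, rfl⟩ := hu
  obtain ⟨y, rfl⟩ := hright b v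
  obtain ⟨z, hz, h⟩ := huv
  exact ⟨y, (hC4 a b x y z h.symm).2.1 hx hz, rfl⟩

theorem left_mem_rightTranslate (hC4 : ConditionC4 mul P)
    (hright : ∀ a, Function.Surjective fun x => mul x a) {a b u v : Q}
    (hv : v ∈ rightTranslate mul P b) (huv : mul u v ∈ rightTranslate mul P (mul a b)) :
    u ∈ rightTranslate mul P a := by
  obtain ⟨x, rfl⟩ := hright a u
  obtain ⟨y, hy, rfl⟩ := hv
  obtain ⟨z, hz, h⟩ := huv
  exact ⟨x, (hC4 a b x y z h.symm).2.2 hy hz, rfl⟩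

theorem rightTranslate_subset_of_mem_of_mem (hC4 : ConditionC4 mul P)
    (hleft : ∀ a, Function.Surjective (mul a))
    (hright : ∀ a, Function.Surjective fun x => mul x a) {a b w : Q}
    (ha : w ∈ rightTranslate mul P a) (hb : w ∈ rightTranslate mul P b) :
    rightTranslate mul P a ⊆ rightTranslate mul P b := by
  intro u hu
  obtain ⟨s, hs⟩ := hleft w (mul u w)
  have hsb : s ∈ rightTranslate mul P b :=
    hC4.right_mem_rightTranslate hright ha (hs ▸ hC4.mul_mem_rightTranslate hright hu hb)
  have huw : mul u w ∈ rightTranslate mul P (mul b b) :=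
    hs ▸ hC4.mul_mem_rightTranslate hright hb hsb
  exact hC4.left_mem_rightTranslate hright hb huw

theorem rightTranslate_eq_of_mem_of_mem (hC4 : ConditionC4 mul P)
    (hleft : ∀ a, Function.Surjective (mul a))
    (hright : ∀ a, Function.Surjective fun x => mul x a) {a b w : Q}
    (ha : w ∈ rightTranslate mul P a) (hb : w ∈ rightTranslate mul P b) :
    rightTranslate mul P a = rightTranslate mul P b :=
  (hC4.rightTranslate_subset_of_mem_of_mem hleft hright ha hb).antisymm
    (hC4.rightTranslate_subset_of_mem_of_mem hleft hright hb ha)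

theorem isNormalCongruence_rightTranslate_eq (hC4 : ConditionC4 mul P)
    (hleft : ∀ a, Function.Surjective (mul a))
    (hright : ∀ a, Function.Surjective fun x => mul x a) (hP : P.Nonempty) :
    IsNormalCongruence mul fun a b => rightTranslate mul P a = rightTranslate mul P b := by
  obtain ⟨p, hp⟩ := hP
  have mem (a : Q) : mul p a ∈ rightTranslate mul P a := ⟨p, hp, rfl⟩
  have mul_mem (a c : Q) : mul (mul p a) (mul p c) ∈ rightTranslate mul P (mul a c) :=
    hC4.mul_mem_rightTranslate hright (mem a) (mem c)
  refine ⟨⟨fun _ => rfl, Eq.symm, Eq.trans⟩, fun a b c d hab hcd => ?_, fun a b c d hab h => ?_,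
    fun a b c d hcd h => ?_⟩
  · exact hC4.rightTranslate_eq_of_mem_of_mem hleft hright (mul_mem a c)
      (hC4.mul_mem_rightTranslate hright (hab ▸ mem a) (hcd ▸ mem c))
  · exact hC4.rightTranslate_eq_of_mem_of_mem hleft hright (mem c)
      (hC4.right_mem_rightTranslate hright (hab ▸ mem a) (h ▸ mul_mem a c))
  · exact hC4.rightTranslate_eq_of_mem_of_mem hleft hright (mem a)
      (hC4.left_mem_rightTranslate hright (hcd ▸ mem c) (h ▸ mul_mem a c))

end ConditionC4

end

theorem normal_iff_C4_general {Q : Type*} (mul : Q → Q → Q)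
    (hQ : IsQuasigroup mul)
    (hld : ∀ x a b : Q, mul x (mul a b) = mul (mul x a) (mul x b))
    (P : Set Q) (hP : P.Nonempty) :
    IsNormalSubquasigroup mul P ↔ ConditionC4 mul P := by
  constructor
  · rintro ⟨-, r, hr, e, rfl⟩
    exact hr.conditionC4_class hld e
  · intro hC4
    have hleft (a : Q) : Function.Surjective (mul a) := (hQ.2 a).1.surjective
    have hright (a : Q) : Function.Surjective fun x => mul x a := (hQ.2 a).2.surjective
    have hidem : ∀ x, mul x x = x := mul_self_of_leftDistrib (fun a => (hQ.2 a).2.injective) hld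
    have hsub : IsSubquasigroup mul P := hC4.isSubquasigroup hidem hld hP
    obtain ⟨e, he⟩ := hP
    refine ⟨hsub, _, hC4.isNormalCongruence_rightTranslate_eq hleft hright ⟨e, he⟩, e, ?_⟩
    have hPe : rightTranslate mul P e = P := (hsub.rightTranslate_eq_self_iff hright).2 he
    have mem_iff (t : Q) : t ∈ P ↔ rightTranslate mul P e = rightTranslate mul P t := by
      rw [hPe, eq_comm, hsub.rightTranslate_eq_self_iff hright]
    exact Set.ext mem_iff

/-- A subquasigroup `P` of a left distributive quasigroup `Q` is normal if and only if
condition (C4) holds: whenever `(x·a)·(y·b) = z·(a·b)` and two of `x, y, z` lie in `P`,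
then so does the third. -/
theorem normal_iff_C4 {Q : Type*} (mul : Q → Q → Q)
    (hQ : IsQuasigroup mul)
    (hld : ∀ x a b : Q, mul x (mul a b) = mul (mul x a) (mul x b))
    (P : Set Q) (hP : IsSubquasigroup mul P) :
    IsNormalSubquasigroup mul P ↔
      ∀ a b x y z : Q, mul (mul x a) (mul y b) = mul z (mul a b) →
        ((x ∈ P → y ∈ P → z ∈ P) ∧ (x ∈ P → z ∈ P → y ∈ P) ∧ (y ∈ P → z ∈ P → x ∈ P)) :=
  normal_iff_C4_general mul hQ hld P hP.1
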